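/- Fix an integer g ≥ 1 and real numbers 0 < κ₁ < κ₂ < ⋯ < κ_{2g}, and let ξ : ℂ ∖ iΓ → ℂ be the unique holomorphic function with ξ(k)⁴ = Π_{j=1}^{g} (k² + κ_{2j−1}²)/(k² + κ_{2j}²) on ℂ ∖ iΓ and ξ(k) → 1 as |k| → ∞. Then for every p ∈ Γ with p not an endpoint of one of the intervals composing Γ, the one-sided boundary values ξ₊(ip) := lim_{ε→0⁺} ξ(ip + ε) and ξ₋(ip) := lim_{ε→0⁺} ξ(ip − ε) exist and are nonzero, and they satisfy the jump relations ξ₊(ip) = i·sgn(p)·ξ₊(−ip) and ξ₋(ip) = −i·sgn(p)·ξ₋(−ip). -/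

import Mathlib

open Filter Topology

/-- The set `Γ = ⋃_{j=1}^{g} ([−κ_{2j}, −κ_{2j−1}] ∪ [κ_{2j−1}, κ_{2j}]) ⊂ ℝ`
(here indexed by `j ∈ {0, …, g-1}`, so the `j`-th piece uses `κ (2j+1)` and `κ (2j+2)`). -/
def Gam (g : ℕ) (κ : ℕ → ℝ) : Set ℝ :=
  ⋃ j ∈ Finset.range g,
    (Set.Icc (-(κ (2 * j + 2))) (-(κ (2 * j + 1))) ∪
      Set.Icc (κ (2 * j + 1)) (κ (2 * j + 2)))

/-- The set `iΓ = {i k : k ∈ Γ} ⊂ ℂ`. -/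
def iGam (g : ℕ) (κ : ℕ → ℝ) : Set ℂ :=
  (fun s : ℝ => Complex.I * (s : ℂ)) '' Gam g κ

/-- The defining properties of `ξ`: holomorphic on `ℂ ∖ iΓ`, a fourth root of
`Π_{j=1}^{g} (k² + κ_{2j−1}²)/(k² + κ_{2j}²)` there, and `ξ(k) → 1` as `|k| → ∞`. -/
def XiProp (g : ℕ) (κ : ℕ → ℝ) (ξ : ℂ → ℂ) : Prop :=
  DifferentiableOn ℂ ξ (iGam g κ)ᶜ ∧
    (∀ k ∈ (iGam g κ)ᶜ,
      ξ k ^ 4 = ∏ j ∈ Finset.range g,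
        (k ^ 2 + ((κ (2 * j + 1) : ℂ)) ^ 2) / (k ^ 2 + ((κ (2 * j + 2) : ℂ)) ^ 2)) ∧
    Tendsto ξ (Bornology.cobounded ℂ) (nhds 1)

/-!
Off the imaginary axis every factor `(k² + a²)/(k² + b²)` avoids `(-∞, 0]`, so the product `R` of
the principal `n`-th roots of the factors is continuous there. On each of the two half planes a
continuous `n`-th root of a given function is determined by its limit at infinity, hence `ξ = R`
with `n = 4`. Now `R` is even and commutes with conjugation, so its four boundary values at `± i q`,
`q > 0`, are `A`, `A`, `conj A`, `conj A`. From the first quadrant the factors approach their real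
values at `i q` through the closed upper half plane, on which principal roots are continuous;
therefore `A = R (i q)`, and each negative factor contributes `exp (2 π i / n)` to `A / conj A`.
For `ξ` exactly one factor is negative, which gives `A = i conj A`.
-/

open Set
open scoped ComplexConjugate

section RootBranches

theorem eqOn_of_pow_eq_of_tendsto {X 𝕜 : Type*} [TopologicalSpace X] [Field 𝕜]
    [TopologicalSpace 𝕜] [T2Space 𝕜] [IsTopologicalDivisionRing 𝕜] {S : Set X} {l : Filter X}
    [l.NeBot] {f h : X → 𝕜} {c : 𝕜} {n : ℕ} (hn : n ≠ 0) (hS : IsPreconnected S) (hl : S ∈ l)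
    (hf : ContinuousOn f S) (hh : ContinuousOn h S) (hh0 : ∀ x ∈ S, h x ≠ 0)
    (hpow : ∀ x ∈ S, f x ^ n = h x ^ n) (hc : c ≠ 0) (hfc : Tendsto f l (𝓝 c))
    (hhc : Tendsto h l (𝓝 c)) : EqOn f h S := by
  classical
  have hfinite : {z : 𝕜 | z ^ n = 1}.Finite := by
    refine (Polynomial.nthRoots n (1 : 𝕜)).toFinset.finite_toSet.subset fun z hz => ?_
    simpa [Polynomial.mem_nthRoots (Nat.pos_of_ne_zero hn)] using hz
  have hroot : MapsTo (fun x => f x / h x) S {z | z ^ n = 1} := fun x hx =>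
    show (f x / h x) ^ n = 1 by rw [div_pow, hpow x hx, div_self (pow_ne_zero n (hh0 x hx))]
  have hlim : Tendsto (fun x => f x / h x) l (𝓝 1) := div_self hc ▸ hfc.div hhc hc
  intro x hx
  have hconst : ∀ᶠ y in l, f x / h x = f y / h y := mem_of_superset hl fun y hy =>
    hS.constant_of_mapsTo hfinite.isDiscrete (hf.div hh hh0) hroot hx hy
  exact (div_eq_one_iff_eq (hh0 x hx)).1
    (tendsto_nhds_unique (tendsto_const_nhds.congr' hconst) hlim)

theorem continuousWithinAt_cpow_const_of_im_nonneg {z : ℂ} (hz : z ≠ 0) (c : ℂ) :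
    ContinuousWithinAt (fun w => w ^ c) {w : ℂ | 0 ≤ w.im} z := by
  by_cases hslit : z ∈ Complex.slitPlane
  · exact (continuousAt_cpow_const hslit).continuousWithinAt
  · simp only [Complex.mem_slitPlane_iff, not_or, not_lt, not_not] at hslit
    obtain ⟨hre, him0⟩ := hslit
    have hre_neg : z.re < 0 := lt_of_le_of_ne hre fun h => hz (Complex.ext h him0)
    have hlog := Complex.continuousWithinAt_log_of_re_neg_of_im_zero hre_neg him0
    refine ((hlog.mul_const c).cexp).congr_of_eventuallyEq ?_ (Complex.cpow_def_of_ne_zero hz c)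
    filter_upwards [mem_nhdsWithin_of_mem_nhds (isOpen_ne.mem_nhds hz)] with w hw
    exact Complex.cpow_def_of_ne_zero hw c

theorem cpow_ofReal_eq_exp_mul_conj (z : ℂ) (r : ℝ) :
    z ^ (r : ℂ) = Complex.exp (2 * z.arg * r * Complex.I) * conj (z ^ (r : ℂ)) := by
  rcases eq_or_ne z 0 with rfl | hz
  · rcases eq_or_ne r 0 with rfl | hr <;> simp [*]
  have hlog : Complex.log z = 2 * z.arg * Complex.I + conj (Complex.log z) := by
    apply Complex.ext <;> simp [Complex.log_im, Complex.log_re]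
    ring
  rw [Complex.cpow_def_of_ne_zero hz, ← Complex.exp_conj, ← Complex.exp_add, map_mul,
    Complex.conj_ofReal]
  congr 1
  linear_combination (r : ℂ) * hlog

theorem ofReal_cpow_natCast_inv_eq_mul_conj (x : ℝ) (n : ℕ) :
    (x : ℂ) ^ (n : ℂ)⁻¹ =
      (if x < 0 then Complex.exp (2 * Real.pi * Complex.I / n) else 1) *
        conj ((x : ℂ) ^ (n : ℂ)⁻¹) := by
  have h := cpow_ofReal_eq_exp_mul_conj (x : ℂ) (n : ℝ)⁻¹
  push_cast at h
  rcases lt_or_ge x 0 with hneg | hnonneg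
  · rw [Complex.arg_ofReal_of_neg hneg] at h
    rwa [if_pos hneg, show 2 * (Real.pi : ℂ) * Complex.I / n = 2 * Real.pi * (n : ℂ)⁻¹ * Complex.I
      by ring]
  · rw [Complex.arg_ofReal_of_nonneg hnonneg] at h
    simpa [hnonneg.not_gt] using h

end RootBranches

section SqRatio

/-- The factor `(k² + a²) / (k² + b²)` of the product defining `ξ ^ 4`. -/
noncomputable def sqRatio (a b : ℝ) (k : ℂ) : ℂ := (k ^ 2 + (a : ℂ) ^ 2) / (k ^ 2 + (b : ℂ) ^ 2)

variable {a b q : ℝ} {k : ℂ}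

theorem sq_add_sq_ne_zero_of_re_ne_zero (b : ℝ) (hk : k.re ≠ 0) : k ^ 2 + (b : ℂ) ^ 2 ≠ 0 := by
  intro h
  have hre := congrArg Complex.re h
  have him := congrArg Complex.im h
  simp only [sq, Complex.add_re, Complex.add_im, Complex.mul_re, Complex.mul_im,
    Complex.ofReal_re, Complex.ofReal_im, Complex.zero_re, Complex.zero_im] at hre him
  have hkim : k.im = 0 := by
    have : k.re * k.im = 0 := by linarith
    exact (mul_eq_zero.1 this).resolve_left hk
  rw [hkim] at hre
  nlinarith [sq_pos_of_ne_zero hk, sq_nonneg b]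

theorem sqRatio_neg (a b : ℝ) (k : ℂ) : sqRatio a b (-k) = sqRatio a b k := by
  simp only [sqRatio, neg_sq]

theorem sqRatio_conj (a b : ℝ) (k : ℂ) : sqRatio a b (conj k) = conj (sqRatio a b k) := by
  simp [sqRatio]

theorem sqRatio_I_mul (a b q : ℝ) :
    sqRatio a b (Complex.I * q) = ((a ^ 2 - q ^ 2) / (b ^ 2 - q ^ 2) : ℝ) := by
  simp only [sqRatio, mul_pow, Complex.I_sq]
  push_cast
  congr 1 <;> ring

theorem sqRatio_im (a b : ℝ) (k : ℂ) :
    (sqRatio a b k).im =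
      2 * k.re * k.im * (b ^ 2 - a ^ 2) / Complex.normSq (k ^ 2 + (b : ℂ) ^ 2) := by
  simp [sqRatio, Complex.div_im, sq]
  ring

theorem sqRatio_mem_slitPlane (a b : ℝ) (hk : k.re ≠ 0) :
    sqRatio a b k ∈ Complex.slitPlane := by
  -- A value `-r ≤ 0` of the ratio means `k² + c² = 0` with `c² = (a² + r b²)/(1 + r)`.
  rw [Complex.mem_slitPlane_iff_not_le_zero]
  intro hle
  obtain ⟨r, hr, hratio⟩ : ∃ r : ℝ, 0 ≤ r ∧ sqRatio a b k = -r :=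
    ⟨-(sqRatio a b k).re, neg_nonneg.2 hle.1, by
      apply Complex.ext
      · simp
      · simpa using hle.2⟩
  have hr1 : (1 + r : ℂ) ≠ 0 := by exact_mod_cast (by positivity : 1 + r ≠ 0)
  have hroot :
      ((√((a ^ 2 + r * b ^ 2) / (1 + r)) : ℝ) : ℂ) ^ 2 = (a ^ 2 + r * b ^ 2) / (1 + r) := by
    exact_mod_cast Real.sq_sqrt (by positivity : 0 ≤ (a ^ 2 + r * b ^ 2) / (1 + r))
  apply sq_add_sq_ne_zero_of_re_ne_zero √((a ^ 2 + r * b ^ 2) / (1 + r)) hk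
  rw [sqRatio, div_eq_iff (sq_add_sq_ne_zero_of_re_ne_zero b hk)] at hratio
  rw [hroot]
  field_simp
  linear_combination hratio

theorem continuousAt_sqRatio (hk : k ^ 2 + (b : ℂ) ^ 2 ≠ 0) : ContinuousAt (sqRatio a b) k := by
  unfold sqRatio
  fun_prop (disch := assumption)

theorem continuousWithinAt_sqRatio_cpow_quadrant (hab : a ^ 2 ≤ b ^ 2)
    (ha : k ^ 2 + (a : ℂ) ^ 2 ≠ 0) (hb : k ^ 2 + (b : ℂ) ^ 2 ≠ 0) (c : ℂ) :
    ContinuousWithinAt (fun z => sqRatio a b z ^ c) {z | 0 ≤ z.re ∧ 0 ≤ z.im} k := by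
  have hmaps : MapsTo (sqRatio a b) {z | 0 ≤ z.re ∧ 0 ≤ z.im} {w | 0 ≤ w.im} := by
    rintro z ⟨hre, him⟩
    have := sub_nonneg.2 hab
    change 0 ≤ (sqRatio a b z).im
    rw [sqRatio_im]
    exact div_nonneg (by positivity) (Complex.normSq_nonneg _)
  have hne : sqRatio a b k ≠ 0 := div_ne_zero ha hb
  exact (continuousWithinAt_cpow_const_of_im_nonneg hne c).comp
    (continuousAt_sqRatio hb).continuousWithinAt hmaps

theorem tendsto_sqRatio_cobounded (a b : ℝ) :
    Tendsto (sqRatio a b) (Bornology.cobounded ℂ) (𝓝 1) := by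
  have hden : Tendsto (fun k : ℂ => k ^ 2 + (b : ℂ) ^ 2) (Bornology.cobounded ℂ)
      (Bornology.cobounded ℂ) :=
    (tendsto_add_const_cobounded _).comp (tendsto_pow_cobounded_cobounded two_ne_zero)
  have hlim : Tendsto (fun k : ℂ => 1 + ((a : ℂ) ^ 2 - (b : ℂ) ^ 2) * (k ^ 2 + (b : ℂ) ^ 2)⁻¹)
      (Bornology.cobounded ℂ) (𝓝 1) := by
    simpa using ((tendsto_inv₀_cobounded.comp hden).const_mul
      ((a : ℂ) ^ 2 - (b : ℂ) ^ 2)).const_add 1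
  refine hlim.congr' ?_
  filter_upwards [hden.eventually_ne_cobounded 0] with k hk
  rw [sqRatio]
  field_simp
  ring

end SqRatio

section SqRatioRoot

/-- The product of the principal `n`-th roots of the factors `sqRatio (a j) (b j)`, `j ∈ s`. Off
the imaginary axis it is a continuous `n`-th root of their product. At `i q` with `q > 0` it is the
boundary value from the right, because the principal root of a negative number is its limit from
above. -/
noncomputable def sqRatioRoot {ι : Type*} (n : ℕ) (s : Finset ι) (a b : ι → ℝ) (k : ℂ) : ℂ :=
  ∏ j ∈ s, sqRatio (a j) (b j) k ^ (n : ℂ)⁻¹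

variable {ι : Type*} {n : ℕ} {s : Finset ι} {a b : ι → ℝ} {k : ℂ} {q : ℝ}

theorem sqRatioRoot_pow (hn : n ≠ 0) (s : Finset ι) (a b : ι → ℝ) (k : ℂ) :
    sqRatioRoot n s a b k ^ n = ∏ j ∈ s, sqRatio (a j) (b j) k := by
  simp only [sqRatioRoot, ← Finset.prod_pow, Complex.cpow_nat_inv_pow _ hn]

theorem sqRatioRoot_ne_zero (hk : ∀ j ∈ s, sqRatio (a j) (b j) k ≠ 0) :
    sqRatioRoot n s a b k ≠ 0 :=
  Finset.prod_ne_zero_iff.2 fun j hj h => hk j hj (Complex.cpow_eq_zero_iff _ _ |>.1 h).1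

theorem sqRatioRoot_neg (n : ℕ) (s : Finset ι) (a b : ι → ℝ) (k : ℂ) :
    sqRatioRoot n s a b (-k) = sqRatioRoot n s a b k := by
  simp only [sqRatioRoot, sqRatio_neg]

theorem sqRatioRoot_conj (n : ℕ) (s : Finset ι) (a b : ι → ℝ) (hk : k.re ≠ 0) :
    sqRatioRoot n s a b (conj k) = conj (sqRatioRoot n s a b k) := by
  simp only [sqRatioRoot, map_prod, sqRatio_conj]
  refine Finset.prod_congr rfl fun j _ => ?_
  rw [Complex.conj_cpow _ _ (Complex.mem_slitPlane_iff_arg.1 (sqRatio_mem_slitPlane _ _ hk)).1]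
  simp

theorem continuousOn_sqRatioRoot (n : ℕ) (s : Finset ι) (a b : ι → ℝ) :
    ContinuousOn (sqRatioRoot n s a b) {k | k.re ≠ 0} :=
  continuousOn_finsetProd _ fun _ _ _ hk =>
    ((continuousAt_sqRatio (sq_add_sq_ne_zero_of_re_ne_zero _ hk)).cpow continuousAt_const
      (sqRatio_mem_slitPlane _ _ hk)).continuousWithinAt

theorem tendsto_sqRatioRoot_cobounded (n : ℕ) (s : Finset ι) (a b : ι → ℝ) :
    Tendsto (sqRatioRoot n s a b) (Bornology.cobounded ℂ) (𝓝 1) := by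
  simpa [sqRatioRoot, funext_iff] using! tendsto_finsetProd s fun j _ =>
    (tendsto_sqRatio_cobounded (a j) (b j)).cpow (tendsto_const_nhds (x := (n : ℂ)⁻¹))
      Complex.one_mem_slitPlane

theorem eqOn_sqRatioRoot {η : ℂ → ℂ} (hn : n ≠ 0) (hη : ContinuousOn η {k | k.re ≠ 0})
    (hpow : ∀ k : ℂ, k.re ≠ 0 → η k ^ n = ∏ j ∈ s, sqRatio (a j) (b j) k)
    (hlim : Tendsto η (Bornology.cobounded ℂ) (𝓝 1)) :
    EqOn η (sqRatioRoot n s a b) {k | k.re ≠ 0} := by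
  have eqOn_of_subset {S : Set ℂ} {l : Filter ℂ} [l.NeBot] (hS : IsPreconnected S)
      (hS0 : S ⊆ {k | k.re ≠ 0}) (hSl : S ∈ l) (hl : l ≤ Bornology.cobounded ℂ) :
      EqOn η (sqRatioRoot n s a b) S :=
    eqOn_of_pow_eq_of_tendsto hn hS hSl (hη.mono hS0)
      ((continuousOn_sqRatioRoot n s a b).mono hS0)
      (fun k hk => sqRatioRoot_ne_zero fun j _ =>
        Complex.slitPlane_ne_zero (sqRatio_mem_slitPlane _ _ (hS0 hk)))
      (fun k hk => (hpow k (hS0 hk)).trans (sqRatioRoot_pow hn s a b k).symm) one_ne_zero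
      (hlim.mono_left hl) ((tendsto_sqRatioRoot_cobounded n s a b).mono_left hl)
  intro k hk
  rcases lt_or_gt_of_ne hk with hneg | hpos
  · refine eqOn_of_subset (convex_halfSpace_re_lt 0).isPreconnected (fun _ h => ne_of_lt h) ?_
      (RCLike.tendsto_ofReal_atBot_cobounded ℂ) hneg
    exact eventually_map.2 ((eventually_lt_atBot (0 : ℝ)).mono fun t ht => by simpa using ht)
  · refine eqOn_of_subset (convex_halfSpace_re_gt 0).isPreconnected (fun _ h => ne_of_gt h) ?_
      (RCLike.tendsto_ofReal_atTop_cobounded ℂ) hpos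
    exact eventually_map.2 ((eventually_gt_atTop (0 : ℝ)).mono fun t ht => by simpa using ht)

theorem continuousWithinAt_sqRatioRoot_quadrant (hab : ∀ j ∈ s, a j ^ 2 ≤ b j ^ 2)
    (ha : ∀ j ∈ s, k ^ 2 + (a j : ℂ) ^ 2 ≠ 0) (hb : ∀ j ∈ s, k ^ 2 + (b j : ℂ) ^ 2 ≠ 0) :
    ContinuousWithinAt (sqRatioRoot n s a b) {z | 0 ≤ z.re ∧ 0 ≤ z.im} k :=
  tendsto_finsetProd s fun j hj =>
    continuousWithinAt_sqRatio_cpow_quadrant (hab j hj) (ha j hj) (hb j hj) (n : ℂ)⁻¹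

theorem tendsto_sqRatioRoot_I_mul_add (hab : ∀ j ∈ s, a j ^ 2 ≤ b j ^ 2) (hq : 0 ≤ q)
    (ha : ∀ j ∈ s, a j ^ 2 ≠ q ^ 2) (hb : ∀ j ∈ s, b j ^ 2 ≠ q ^ 2) :
    Tendsto (fun ε : ℝ => sqRatioRoot n s a b (Complex.I * q + ε)) (𝓝[>] 0)
      (𝓝 (sqRatioRoot n s a b (Complex.I * q))) := by
  have hne {c : ℝ} (hc : c ^ 2 ≠ q ^ 2) : (Complex.I * (q : ℂ)) ^ 2 + (c : ℂ) ^ 2 ≠ 0 := by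
    rw [mul_pow, Complex.I_sq, neg_one_mul, neg_add_eq_sub, sub_ne_zero]
    exact_mod_cast hc
  refine (continuousWithinAt_sqRatioRoot_quadrant hab
    (fun j hj => hne (ha j hj)) fun j hj => hne (hb j hj)).tendsto.comp
      (tendsto_nhdsWithin_iff.2 ⟨?_, ?_⟩)
  · have hcont : Continuous fun ε : ℝ => Complex.I * (q : ℂ) + ε := by fun_prop
    simpa using (hcont.tendsto 0).mono_left nhdsWithin_le_nhds
  · filter_upwards [self_mem_nhdsWithin] with ε hε
    exact ⟨by simpa using (mem_Ioi.1 hε).le, by simpa using hq⟩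

theorem tendsto_sqRatioRoot_neg_I_mul_add (hab : ∀ j ∈ s, a j ^ 2 ≤ b j ^ 2) (hq : 0 ≤ q)
    (ha : ∀ j ∈ s, a j ^ 2 ≠ q ^ 2) (hb : ∀ j ∈ s, b j ^ 2 ≠ q ^ 2) :
    Tendsto (fun ε : ℝ => sqRatioRoot n s a b (-(Complex.I * q) + ε)) (𝓝[>] 0)
      (𝓝 (conj (sqRatioRoot n s a b (Complex.I * q)))) := by
  refine ((Complex.continuous_conj.tendsto _).comp
    (tendsto_sqRatioRoot_I_mul_add (n := n) hab hq ha hb)).congr' ?_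
  filter_upwards [self_mem_nhdsWithin] with ε hε
  have hre : (Complex.I * (q : ℂ) + ε).re ≠ 0 := by simpa using (mem_Ioi.1 hε).ne'
  rw [Function.comp_apply, ← sqRatioRoot_conj n s a b hre]
  simp

theorem sqRatioRoot_I_mul_eq_exp_pow_mul_conj (n : ℕ) (hab : ∀ j ∈ s, a j ^ 2 ≤ b j ^ 2) (q : ℝ) :
    sqRatioRoot n s a b (Complex.I * q) =
      Complex.exp (2 * Real.pi * Complex.I / n) ^ {j ∈ s | a j ^ 2 < q ^ 2 ∧ q ^ 2 < b j ^ 2}.card *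
        conj (sqRatioRoot n s a b (Complex.I * q)) := by
  have hneg {j : ι} (hj : j ∈ s) : (a j ^ 2 - q ^ 2) / (b j ^ 2 - q ^ 2) < 0 ↔
      a j ^ 2 < q ^ 2 ∧ q ^ 2 < b j ^ 2 := by
    have := hab j hj
    grind [div_neg_iff]
  have hfactor : ∀ j ∈ s, sqRatio (a j) (b j) (Complex.I * q) ^ (n : ℂ)⁻¹ =
      (if a j ^ 2 < q ^ 2 ∧ q ^ 2 < b j ^ 2 then Complex.exp (2 * Real.pi * Complex.I / n) else 1) *
        conj (sqRatio (a j) (b j) (Complex.I * q) ^ (n : ℂ)⁻¹) := by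
    intro j hj
    simp only [← hneg hj, sqRatio_I_mul]
    exact ofReal_cpow_natCast_inv_eq_mul_conj _ n
  conv_lhs => rw [sqRatioRoot, Finset.prod_congr rfl hfactor, Finset.prod_mul_distrib,
    Finset.prod_ite, Finset.prod_const, Finset.prod_const_one, mul_one, ← map_prod]
  rfl

theorem tendsto_boundary_of_eqOn_sqRatioRoot {η : ℂ → ℂ} {z L : ℂ}
    (hη : EqOn η (sqRatioRoot n s a b) {k | k.re ≠ 0}) (hz : z.re = 0)
    (hL : Tendsto (fun ε : ℝ => sqRatioRoot n s a b (z + ε)) (𝓝[>] 0) (𝓝 L)) :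
    Tendsto (fun ε : ℝ => η (z + ε)) (𝓝[>] 0) (𝓝 L) ∧
      Tendsto (fun ε : ℝ => η (-z - ε)) (𝓝[>] 0) (𝓝 L) := by
  have hre {ε : ℝ} (hε : ε ∈ Ioi 0) : (z + ε).re ≠ 0 := by simpa [hz] using (mem_Ioi.1 hε).ne'
  constructor <;> refine hL.congr' ?_ <;> filter_upwards [self_mem_nhdsWithin] with ε hε
  · exact (hη (hre hε)).symm
  · rw [← neg_add', hη (x := -(z + ε)) (neg_ne_zero.2 (hre hε)), sqRatioRoot_neg]

end SqRatioRoot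

section Xi

variable {g : ℕ} {κ : ℕ → ℝ} {ξ : ℂ → ℂ} {q : ℝ}

theorem kappa_pos (h0 : 0 < κ 1) (hmono : ∀ i, 1 ≤ i → i + 1 ≤ 2 * g → κ i < κ (i + 1)) {i : ℕ}
    (hi : i ∈ Icc 1 (2 * g)) : 0 < κ i := by
  obtain ⟨hi1, hig⟩ := hi
  induction i, hi1 using Nat.le_induction with
  | base => exact h0
  | succ i hi ih => exact (ih (by omega)).trans (hmono i hi hig)

theorem strictMonoOn_kappa_sq (h0 : 0 < κ 1)
    (hmono : ∀ i, 1 ≤ i → i + 1 ≤ 2 * g → κ i < κ (i + 1)) :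
    StrictMonoOn (fun i => κ i ^ 2) (Icc 1 (2 * g)) :=
  strictMonoOn_of_lt_add_one ordConnected_Icc fun i _ hi hi' =>
    pow_lt_pow_left₀ (hmono i hi.1 hi'.2) (kappa_pos h0 hmono hi).le two_ne_zero

theorem exists_sq_mem_Ioo_of_mem_Gam (hpos : ∀ i ∈ Icc 1 (2 * g), 0 < κ i) {p : ℝ}
    (hp : p ∈ Gam g κ) (hne : ∀ i ∈ Icc 1 (2 * g), κ i ^ 2 ≠ p ^ 2) :
    ∃ j < g, p ^ 2 ∈ Ioo (κ (2 * j + 1) ^ 2) (κ (2 * j + 2) ^ 2) := by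
  simp only [Gam, mem_iUnion, Finset.mem_range] at hp
  obtain ⟨j, hj, hp⟩ := hp
  have := hpos (2 * j + 1) ⟨by omega, by omega⟩
  have hIcc : p ^ 2 ∈ Icc (κ (2 * j + 1) ^ 2) (κ (2 * j + 2) ^ 2) := by
    rcases hp with ⟨hl, hr⟩ | ⟨hl, hr⟩ <;> constructor <;> nlinarith
  exact ⟨j, hj, hIcc.1.lt_of_ne (hne _ ⟨by omega, by omega⟩),
    hIcc.2.lt_of_ne' (hne _ ⟨by omega, by omega⟩)⟩

theorem card_filter_sq_mem_Ioo (hsq : StrictMonoOn (fun i => κ i ^ 2) (Icc 1 (2 * g))) {j : ℕ}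
    (hj : j < g) (hq : q ^ 2 ∈ Ioo (κ (2 * j + 1) ^ 2) (κ (2 * j + 2) ^ 2)) :
    {l ∈ Finset.range g | κ (2 * l + 1) ^ 2 < q ^ 2 ∧ q ^ 2 < κ (2 * l + 2) ^ 2}.card = 1 := by
  refine Finset.card_eq_one.2 ⟨j, ?_⟩
  ext l
  simp only [Finset.mem_filter, Finset.mem_range, Finset.mem_singleton]
  refine ⟨fun ⟨_, hlq⟩ => ?_, fun h => h ▸ ⟨hj, hq⟩⟩
  have h1 : 2 * l + 1 < 2 * j + 2 := (hsq.lt_iff_lt ⟨by omega, by omega⟩ ⟨by omega, by omega⟩).1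
    (hlq.1.trans hq.2)
  have h2 : 2 * j + 1 < 2 * l + 2 := (hsq.lt_iff_lt ⟨by omega, by omega⟩ ⟨by omega, by omega⟩).1
    (hq.1.trans hlq.2)
  omega

theorem XiProp.eqOn_re_ne_zero (hξ : XiProp g κ ξ) :
    EqOn ξ (sqRatioRoot 4 (Finset.range g) (fun j => κ (2 * j + 1)) fun j => κ (2 * j + 2))
      {k | k.re ≠ 0} := by
  obtain ⟨hdiff, hpow, hlim⟩ := hξ
  have hmem : {k : ℂ | k.re ≠ 0} ⊆ (iGam g κ)ᶜ := by
    rintro _ hk ⟨s, -, rfl⟩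
    simp at hk
  exact eqOn_sqRatioRoot four_ne_zero (hdiff.continuousOn.mono hmem)
    (fun k hk => hpow k (hmem hk)) hlim

theorem XiProp.exists_boundaryValue (hξ : XiProp g κ ξ)
    (hsq : StrictMonoOn (fun i => κ i ^ 2) (Icc 1 (2 * g))) {j : ℕ} (hj : j < g) (hq : 0 ≤ q)
    (hqj : q ^ 2 ∈ Ioo (κ (2 * j + 1) ^ 2) (κ (2 * j + 2) ^ 2))
    (hne : ∀ i ∈ Icc 1 (2 * g), κ i ^ 2 ≠ q ^ 2) :
    ∃ A : ℂ, A ≠ 0 ∧ A = Complex.I * conj A ∧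
      Tendsto (fun ε : ℝ => ξ (Complex.I * q + ε)) (𝓝[>] 0) (𝓝 A) ∧
      Tendsto (fun ε : ℝ => ξ (Complex.I * q - ε)) (𝓝[>] 0) (𝓝 (conj A)) ∧
      Tendsto (fun ε : ℝ => ξ (-(Complex.I * q) + ε)) (𝓝[>] 0) (𝓝 (conj A)) ∧
      Tendsto (fun ε : ℝ => ξ (-(Complex.I * q) - ε)) (𝓝[>] 0) (𝓝 A) := by
  have hab : ∀ l ∈ Finset.range g, κ (2 * l + 1) ^ 2 ≤ κ (2 * l + 2) ^ 2 := fun l hl => by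
    have := Finset.mem_range.1 hl
    exact (hsq ⟨by omega, by omega⟩ ⟨by omega, by omega⟩ (by omega)).le
  have ha : ∀ l ∈ Finset.range g, κ (2 * l + 1) ^ 2 ≠ q ^ 2 := fun l hl => by
    have := Finset.mem_range.1 hl
    exact hne _ ⟨by omega, by omega⟩
  have hb : ∀ l ∈ Finset.range g, κ (2 * l + 2) ^ 2 ≠ q ^ 2 := fun l hl => by
    have := Finset.mem_range.1 hl
    exact hne _ ⟨by omega, by omega⟩
  have hzeta : Complex.exp (2 * Real.pi * Complex.I / (4 : ℕ)) = Complex.I := by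
    rw [show 2 * (Real.pi : ℂ) * Complex.I / (4 : ℕ) = Real.pi / 2 * Complex.I by push_cast; ring,
      Complex.exp_pi_div_two_mul_I]
  have hjump := sqRatioRoot_I_mul_eq_exp_pow_mul_conj 4 hab q
  rw [card_filter_sq_mem_Ioo hsq hj hqj, pow_one, hzeta] at hjump
  obtain ⟨hright, hleft_neg⟩ := tendsto_boundary_of_eqOn_sqRatioRoot hξ.eqOn_re_ne_zero (by simp)
    (tendsto_sqRatioRoot_I_mul_add hab hq ha hb)
  obtain ⟨hright_neg, hleft⟩ := tendsto_boundary_of_eqOn_sqRatioRoot hξ.eqOn_re_ne_zero (by simp)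
    (tendsto_sqRatioRoot_neg_I_mul_add hab hq ha hb)
  rw [neg_neg] at hleft
  refine ⟨_, sqRatioRoot_ne_zero fun l hl => ?_, hjump, hright, hleft, hright_neg, hleft_neg⟩
  rw [sqRatio_I_mul]
  exact_mod_cast div_ne_zero (sub_ne_zero.2 (ha l hl)) (sub_ne_zero.2 (hb l hl))

end Xi

/-- For every `p ∈ Γ` that is not an endpoint of one of the intervals
composing `Γ` (i.e. `p ≠ ±κ_j`), the one-sided boundary values
`ξ₊(ip) = lim_{ε→0⁺} ξ(ip + ε)` and `ξ₋(ip) = lim_{ε→0⁺} ξ(ip − ε)` exist and are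
nonzero (as do the corresponding limits `ξ₊(−ip)`, `ξ₋(−ip)`), and they satisfy the jump
relations `ξ₊(ip) = i sgn(p) ξ₊(−ip)` and `ξ₋(ip) = −i sgn(p) ξ₋(−ip)`. -/
theorem stmt_5 (g : ℕ) (hg : 1 ≤ g) (κ : ℕ → ℝ) (h0 : 0 < κ 1)
    (hmono : ∀ i, 1 ≤ i → i + 1 ≤ 2 * g → κ i < κ (i + 1))
    (ξ : ℂ → ℂ) (hξ : XiProp g κ ξ) :
    ∀ p ∈ Gam g κ, (∀ j, 1 ≤ j → j ≤ 2 * g → p ≠ κ j ∧ p ≠ -κ j) →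
      ∃ Lp Lm Mp Mm : ℂ,
        Tendsto (fun ε : ℝ => ξ (Complex.I * (p : ℂ) + (ε : ℂ))) (𝓝[>] 0) (𝓝 Lp) ∧
        Tendsto (fun ε : ℝ => ξ (Complex.I * (p : ℂ) - (ε : ℂ))) (𝓝[>] 0) (𝓝 Lm) ∧
        Tendsto (fun ε : ℝ => ξ (-(Complex.I * (p : ℂ)) + (ε : ℂ))) (𝓝[>] 0) (𝓝 Mp) ∧
        Tendsto (fun ε : ℝ => ξ (-(Complex.I * (p : ℂ)) - (ε : ℂ))) (𝓝[>] 0) (𝓝 Mm) ∧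
        Lp ≠ 0 ∧ Lm ≠ 0 ∧
        Lp = Complex.I * (Real.sign p : ℂ) * Mp ∧
        Lm = -Complex.I * (Real.sign p : ℂ) * Mm := by
  intro p hp hne
  have hsq_ne : ∀ i ∈ Icc 1 (2 * g), κ i ^ 2 ≠ p ^ 2 := fun i hi h =>
    (sq_eq_sq_iff_eq_or_eq_neg.1 h.symm).elim (hne i hi.1 hi.2).1 (hne i hi.1 hi.2).2
  obtain ⟨j, hj, hpj⟩ := exists_sq_mem_Ioo_of_mem_Gam (fun i => kappa_pos h0 hmono) hp hsq_ne
  obtain ⟨A, hA0, hA, hright, hleft, hright_neg, hleft_neg⟩ :=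
    hξ.exists_boundaryValue (q := |p|) (strictMonoOn_kappa_sq h0 hmono) hj (abs_nonneg p)
      (by rwa [sq_abs]) (by rwa [sq_abs])
  have hconj0 : conj A ≠ 0 := (map_ne_zero _).2 hA0
  have hconj : conj A = -(Complex.I * A) := by
    linear_combination Complex.I * hA + conj A * Complex.I_sq
  have hp0 : p ≠ 0 := sq_pos_iff.1 ((sq_nonneg _).trans_lt hpj.1)
  rcases hp0.lt_or_gt with hneg | hpos
  · simp only [abs_of_neg hneg, Complex.ofReal_neg, mul_neg, neg_neg]
      at hright hleft hright_neg hleft_neg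
    refine ⟨conj A, A, A, conj A, hright_neg, hleft_neg, hright, hleft, hconj0, hA0, ?_, ?_⟩ <;>
      simpa [Real.sign_of_neg hneg]
  · rw [abs_of_pos hpos] at hright hleft hright_neg hleft_neg
    refine ⟨A, conj A, conj A, A, hright, hleft, hright_neg, hleft_neg, hA0, hconj0, ?_, ?_⟩ <;>
      simpa [Real.sign_of_pos hpos]
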